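/- Let G be a simple graph whose girth is greater than 6, i.e. every cycle in G has length at least 7. Let u and v be distinct vertices of G joined by a path p of length at most 4. Then every vertex w that is adjacent to both u and v lies on the path p. -/

import Mathlib

/-! Two distinct paths with the same endpoints enclose a cycle no longer than their total length, so
two paths of total length below the girth coincide. In particular, erasing the loops of a short walk
`p` from `u` to `v` yields the path `u, w, v`, and loop erasure adds no vertices to `p`. -/

section ShortPaths

variable {V : Type*} {G : SimpleGraph V} {u v w : V}

theorem eq_of_isPath_of_length_add_length_lt_egirth {p q : G.Walk u v} (hp : p.IsPath)
    (hq : q.IsPath) (hlen : (p.length + q.length : ℕ∞) < G.egirth) : p = q := by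
  by_contra hne
  obtain ⟨_, _, _, c, hc, hclen⟩ := hp.exists_isCycle_length_le_add_of_ne hq hne
  have hegirth : G.egirth ≤ p.length + q.length :=
    (SimpleGraph.egirth_le_length hc).trans (mod_cast hclen)
  exact hlen.not_ge hegirth

theorem support_subset_of_length_add_length_lt_egirth {p q : G.Walk u v} (hq : q.IsPath)
    (hlen : (p.length + q.length : ℕ∞) < G.egirth) : q.support ⊆ p.support := by
  classical
  have hbypass : (p.bypass.length + q.length : ℕ∞) < G.egirth := by
    grw [p.length_bypass_le_length]
    exact hlen
  have heq : p.bypass = q :=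
    eq_of_isPath_of_length_add_length_lt_egirth p.bypass_isPath hq hbypass
  exact heq ▸ p.support_bypass_subset_support

theorem isPath_cons_toWalk (huw : G.Adj u w) (hwv : G.Adj w v) (huv : u ≠ v) :
    (SimpleGraph.Walk.cons huw hwv.toWalk).IsPath :=
  (SimpleGraph.Walk.IsPath.of_adj hwv).cons (by simp [huw.ne, huv])

end ShortPaths

theorem stmt16_general {V : Type*} {G : SimpleGraph V} {u v w : V} (huv : u ≠ v)
    (p : G.Walk u v) (hlen : (p.length + 2 : ℕ∞) < G.egirth) (huw : G.Adj u w)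
    (hvw : G.Adj v w) : w ∈ p.support :=
  support_subset_of_length_add_length_lt_egirth (isPath_cons_toWalk huw hvw.symm huv)
    (by simpa using hlen) (by simp)

/-- In a simple graph of girth greater than 6, any common neighbor of two distinct
vertices joined by a path of length at most 4 lies on that path. -/
theorem stmt16 {V : Type*} (G : SimpleGraph V) (hgirth : 6 < G.girth)
    (u v : V) (huv : u ≠ v) (p : G.Walk u v) (hp : p.IsPath) (hlen : p.length ≤ 4) :
    ∀ w : V, G.Adj u w → G.Adj v w → w ∈ p.support := by
  have hshort : p.length + 2 < G.girth := by lia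
  exact fun _ => stmt16_general huv p
    (lt_of_lt_of_le (mod_cast hshort) G.egirth.natCast_toNat_le_self)
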